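/- Let P_t > 0, let G ≥ 1 be an integer, set p = P_t/G, and let ζ ∈ (0,1) and L > 0 be reals. Define the effective ZF rate 𝓡(c) = (1 − ζc)·c·G·L·ln(1 + p·(1/c − 1)) for c ∈ (0, 1). Then there exists a unique c* ∈ (0, 1) satisfying (1 − 2ζc*)·ln(1 + p·(1/c* − 1)) − (1 − ζc*)·p/((1 − p)c* + p) = 0, and this c* is the unique global maximizer of 𝓡 over (0, 1); moreover c* < c*_R, where c*_R ∈ (0,1) is the unique maximizer on (0,1) of the cost-free rate c ↦ c·G·L·ln(1 + p·(1/c − 1)). -/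

import Mathlib

/-!
The cost-free rate `f c = c log (1 + p (1/c - 1))` lies strictly below each of its tangents; this is
`log t < t - 1` in disguise. If nonnegative `f` and `g` lie below their tangents at a stationary
point `c` of `f * g`, then `f x * g x ≤ f c * g c + f' * g' * (x - c) ^ 2`, and stationarity forces
`f' * g' ≤ 0`. Hence every stationary point of `(1 - ζ c) f c` is its strict global maximum, so
there is at most one, while Rolle's theorem on `[0, 1]` provides one. Comparing the maxima for two
costs, each against the other's maximizer, shows that the maximizer decreases with the cost.
-/

open Set Real

section StrictMax

variable {α β : Type*} {s : Set α} {f : α → β} {a : α}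

theorem le_of_forall_ne_lt [Preorder β] (h : ∀ x ∈ s, x ≠ a → f x < f a) :
    ∀ x ∈ s, f x ≤ f a := by
  intro x hx
  rcases eq_or_ne x a with rfl | hxa
  · exact le_rfl
  · exact (h x hx hxa).le

theorem eq_of_forall_le_of_forall_ne_lt [Preorder β] (ha : a ∈ s)
    (h : ∀ x ∈ s, x ≠ a → f x < f a) : ∀ b ∈ s, (∀ x ∈ s, f x ≤ f b) → b = a := by
  intro b hb hmax
  by_contra hba
  exact (h b hb hba).not_ge (hmax a ha)

end StrictMax

theorem mul_lt_mul_of_lt_tangent_of_le_tangent {K : Type*} [CommRing K] [LinearOrder K]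
    [IsStrictOrderedRing K] {f g : K → K} {f' g' c x : K}
    (hf : f x < f c + f' * (x - c)) (hg : g x ≤ g c + g' * (x - c))
    (hfc : 0 ≤ f c) (hfx : 0 ≤ f x) (hgc : 0 < g c) (hgx : 0 < g x)
    (hstat : f' * g c + f c * g' = 0) : f x * g x < f c * g c := by
  have hslopes : f' * g' ≤ 0 := by
    refine nonpos_of_mul_nonpos_left ?_ hgc
    calc f' * g' * g c = -(f c * g' ^ 2) := by linear_combination g' * hstat
      _ ≤ 0 := neg_nonpos.2 (by positivity)
  calc f x * g x < (f c + f' * (x - c)) * g x := by gcongr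
    _ ≤ (f c + f' * (x - c)) * (g c + g' * (x - c)) :=
      mul_le_mul_of_nonneg_left hg (hfx.trans hf.le)
    _ = f c * g c + f' * g' * (x - c) ^ 2 := by linear_combination (x - c) * hstat
    _ ≤ f c * g c := add_le_of_nonpos_right (mul_nonpos_of_nonpos_of_nonneg hslopes (sq_nonneg _))

/-- The cost-free ZF rate at load `c` and per-group power `p`, normalized by the factor `G * L`. At
`c = 0` the conventions of division give the value `0`, which is also the limit. -/
noncomputable def zfRate (p c : ℝ) : ℝ := c * log (1 + p * (1 / c - 1))

/-- The derivative of `zfRate p` at `c`. -/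
noncomputable def zfRateDeriv (p c : ℝ) : ℝ :=
  log (1 + p * (1 / c - 1)) - p / ((1 - p) * c + p)

/-- The effective ZF rate at load `c`, normalized by the factor `G * L`: a fraction `ζ * c` of each
coherence block is spent on training. -/
noncomputable def effectiveRate (p ζ c : ℝ) : ℝ := zfRate p c * (1 - ζ * c)

/-- The derivative of `effectiveRate p ζ` at `c`, arranged as in the stationarity equation. -/
noncomputable def effectiveRateDeriv (p ζ c : ℝ) : ℝ :=
  (1 - 2 * ζ * c) * log (1 + p * (1 / c - 1)) - (1 - ζ * c) * p / ((1 - p) * c + p)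

theorem effectiveRateDeriv_eq (p ζ c : ℝ) :
    effectiveRateDeriv p ζ c = zfRateDeriv p c * (1 - ζ * c) + zfRate p c * -ζ := by
  simp only [effectiveRateDeriv, zfRateDeriv, zfRate]
  ring

theorem one_add_mul_one_div_sub_one (p : ℝ) {c : ℝ} (hc : c ≠ 0) :
    1 + p * (1 / c - 1) = ((1 - p) * c + p) / c := by
  field_simp
  ring

theorem one_sub_mul_pos {ζ c : ℝ} (hζ : ζ ≤ 1) (hc : c ∈ Ioo (0 : ℝ) 1) : 0 < 1 - ζ * c := by
  nlinarith [hc.1, hc.2]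

section PositivePower

variable {p c x : ℝ} (hp : 0 < p)
include hp

theorem one_sub_mul_add_pos (hc : c ∈ Icc (0 : ℝ) 1) : 0 < (1 - p) * c + p := by
  rcases hc.1.eq_or_lt with rfl | hc0
  · simpa using hp
  · nlinarith [mul_nonneg hp.le (sub_nonneg.2 hc.2)]

theorem zfRate_pos (hc : c ∈ Ioo (0 : ℝ) 1) : 0 < zfRate p c := by
  have hinv : 0 < 1 / c - 1 := sub_pos.2 (one_lt_one_div hc.1 hc.2)
  exact mul_pos hc.1 (log_pos (lt_add_of_pos_right 1 (mul_pos hp hinv)))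

theorem hasDerivAt_zfRate (hc : c ∈ Ioo (0 : ℝ) 1) :
    HasDerivAt (zfRate p) (zfRateDeriv p c) c := by
  have hc0 : c ≠ 0 := hc.1.ne'
  have hD : 0 < (1 - p) * c + p := one_sub_mul_add_pos hp (Ioo_subset_Icc_self hc)
  have harg : 1 + p * (1 / c - 1) = ((1 - p) * c + p) / c := one_add_mul_one_div_sub_one p hc0
  have hargDeriv : HasDerivAt (fun y : ℝ => 1 + p * (1 / y - 1)) (p * -(c ^ 2)⁻¹) c := by
    simpa only [one_div] using (((hasDerivAt_inv hc0).sub_const 1).const_mul p).const_add 1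
  have hlog := hargDeriv.log (harg ▸ (div_pos hD hc.1).ne')
  refine ((hasDerivAt_id' c).mul hlog).congr_deriv ?_
  simp only [zfRateDeriv, harg]
  field_simp
  ring

theorem continuousOn_zfRate : ContinuousOn (zfRate p) (Icc 0 1) := by
  have hsplit : EqOn (zfRate p) (fun c => c * log ((1 - p) * c + p) + negMulLog c) (Icc 0 1) := by
    intro c hc
    rcases eq_or_ne c 0 with rfl | hc0
    · simp [zfRate]
    · simp only [zfRate, negMulLog]
      rw [one_add_mul_one_div_sub_one p hc0, log_div (one_sub_mul_add_pos hp hc).ne' hc0]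
      ring
  refine ContinuousOn.congr ?_ hsplit
  have hlog : ContinuousOn (fun c => log ((1 - p) * c + p)) (Icc 0 1) :=
    ContinuousOn.log (by fun_prop) fun c hc => (one_sub_mul_add_pos hp hc).ne'
  exact (continuousOn_id.mul hlog).add continuous_negMulLog.continuousOn

theorem zfRate_lt_tangent (hc : c ∈ Ioo (0 : ℝ) 1) (hx : x ∈ Ioo (0 : ℝ) 1) (hxc : x ≠ c) :
    zfRate p x < zfRate p c + zfRateDeriv p c * (x - c) := by
  have hc0 : 0 < c := hc.1
  have hx0 : 0 < x := hx.1
  simp only [zfRate, zfRateDeriv, one_add_mul_one_div_sub_one p hc0.ne',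
    one_add_mul_one_div_sub_one p hx0.ne']
  have hDc : 0 < (1 - p) * c + p := one_sub_mul_add_pos hp (Ioo_subset_Icc_self hc)
  have hDx : 0 < (1 - p) * x + p := one_sub_mul_add_pos hp (Ioo_subset_Icc_self hx)
  set u := ((1 - p) * c + p) / c with hu
  set v := ((1 - p) * x + p) / x with hv
  have hu0 : 0 < u := div_pos hDc hc0
  have hv0 : 0 < v := div_pos hDx hx0
  have hratio : x * (v / u - 1) = -(p / ((1 - p) * c + p) * (x - c)) := by
    rw [hu, hv]
    field_simp
    ring
  have hratio_ne : v / u ≠ 1 := by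
    intro h
    rw [h, sub_self, mul_zero, zero_eq_neg] at hratio
    exact mul_ne_zero (div_pos hp hDc).ne' (sub_ne_zero.2 hxc) hratio
  have hlog : x * (log v - log u) < x * (v / u - 1) := by
    rw [← log_div hv0.ne' hu0.ne']
    gcongr
    exact log_lt_sub_one_of_pos (div_pos hv0 hu0) hratio_ne
  linarith

theorem hasDerivAt_effectiveRate (ζ : ℝ) (hc : c ∈ Ioo (0 : ℝ) 1) :
    HasDerivAt (effectiveRate p ζ) (effectiveRateDeriv p ζ c) c := by
  rw [effectiveRateDeriv_eq]
  have hfraction : HasDerivAt (fun y : ℝ => 1 - ζ * y) (-ζ) c := by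
    simpa using ((hasDerivAt_id' c).const_mul ζ).const_sub 1
  exact (hasDerivAt_zfRate hp hc).mul hfraction

theorem exists_effectiveRateDeriv_eq_zero (ζ : ℝ) :
    ∃ c ∈ Ioo (0 : ℝ) 1, effectiveRateDeriv p ζ c = 0 := by
  have hcont : ContinuousOn (effectiveRate p ζ) (Icc 0 1) :=
    (continuousOn_zfRate hp).mul (by fun_prop)
  have hends : effectiveRate p ζ 0 = effectiveRate p ζ 1 := by simp [effectiveRate, zfRate]
  exact exists_hasDerivAt_eq_zero one_pos hcont hends fun c hc => hasDerivAt_effectiveRate hp ζ hc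

theorem effectiveRate_lt_of_effectiveRateDeriv_eq_zero {ζ : ℝ} (hζ : ζ ≤ 1)
    (hc : c ∈ Ioo (0 : ℝ) 1) (hstat : effectiveRateDeriv p ζ c = 0) :
    ∀ x ∈ Ioo (0 : ℝ) 1, x ≠ c → effectiveRate p ζ x < effectiveRate p ζ c := by
  intro x hx hxc
  rw [effectiveRateDeriv_eq] at hstat
  exact mul_lt_mul_of_lt_tangent_of_le_tangent (g := fun y => 1 - ζ * y)
    (zfRate_lt_tangent hp hc hx hxc) (by linarith) (zfRate_pos hp hc).le (zfRate_pos hp hx).le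
    (one_sub_mul_pos hζ hc) (one_sub_mul_pos hζ hx) hstat

theorem eq_of_effectiveRateDeriv_eq_zero {ζ : ℝ} (hζ : ζ ≤ 1)
    (hc : c ∈ Ioo (0 : ℝ) 1) (hcstat : effectiveRateDeriv p ζ c = 0)
    (hx : x ∈ Ioo (0 : ℝ) 1) (hxstat : effectiveRateDeriv p ζ x = 0) : x = c :=
  eq_of_forall_le_of_forall_ne_lt hc
    (effectiveRate_lt_of_effectiveRateDeriv_eq_zero hp hζ hc hcstat) x hx
    (le_of_forall_ne_lt (effectiveRate_lt_of_effectiveRateDeriv_eq_zero hp hζ hx hxstat))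

theorem cost_eq_of_effectiveRateDeriv_eq_zero {ξ ζ : ℝ} (hc : c ∈ Ioo (0 : ℝ) 1)
    (hξ : effectiveRateDeriv p ξ c = 0) (hζ : effectiveRateDeriv p ζ c = 0) : ξ = ζ := by
  rw [effectiveRateDeriv_eq] at hξ hζ
  have hmul : zfRate p c * (ξ - ζ) = 0 := by
    linear_combination (1 - ξ * c) * hζ - (1 - ζ * c) * hξ
  exact sub_eq_zero.1 ((mul_eq_zero.1 hmul).resolve_left (zfRate_pos hp hc).ne')

theorem lt_of_effectiveRateDeriv_eq_zero_of_cost_lt {ξ ζ d : ℝ} (hξζ : ξ < ζ) (hζ : ζ ≤ 1)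
    (hc : c ∈ Ioo (0 : ℝ) 1) (hcstat : effectiveRateDeriv p ζ c = 0)
    (hd : d ∈ Ioo (0 : ℝ) 1) (hdstat : effectiveRateDeriv p ξ d = 0) : c < d := by
  have hcd : c ≠ d := by
    rintro rfl
    exact hξζ.ne (cost_eq_of_effectiveRateDeriv_eq_zero hp hc hdstat hcstat)
  have hξ : ξ ≤ 1 := hξζ.le.trans hζ
  have hζ_max : zfRate p d * (1 - ζ * d) < zfRate p c * (1 - ζ * c) :=
    effectiveRate_lt_of_effectiveRateDeriv_eq_zero hp hζ hc hcstat d hd hcd.symm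
  have hξ_max : zfRate p c * (1 - ξ * c) < zfRate p d * (1 - ξ * d) :=
    effectiveRate_lt_of_effectiveRateDeriv_eq_zero hp hξ hd hdstat c hc hcd
  have hprod := mul_lt_mul'' hζ_max hξ_max
    (mul_pos (zfRate_pos hp hd) (one_sub_mul_pos hζ hd)).le
    (mul_pos (zfRate_pos hp hc) (one_sub_mul_pos hξ hc)).le
  have hrates : 0 < zfRate p c * zfRate p d := mul_pos (zfRate_pos hp hc) (zfRate_pos hp hd)
  have hcross : 0 < zfRate p c * zfRate p d * ((ζ - ξ) * (d - c)) := by linarith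
  exact sub_pos.1 (pos_of_mul_pos_right (pos_of_mul_pos_right hcross hrates.le) (sub_pos.2 hξζ).le)

end PositivePower

theorem stmt_6_general {p G ζ L : ℝ} (hp : 0 < p) (hG : 0 < G) (hζ : ζ ≤ 1) (hL : 0 < L) :
    let R : ℝ → ℝ := fun c => (1 - ζ * c) * c * G * L * log (1 + p * (1 / c - 1))
    let Rfree : ℝ → ℝ := fun c => c * G * L * log (1 + p * (1 / c - 1))
    ∃ c ∈ Ioo (0 : ℝ) 1, ∃ cR ∈ Ioo (0 : ℝ) 1,
      ((1 - 2 * ζ * c) * log (1 + p * (1 / c - 1))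
          - (1 - ζ * c) * p / ((1 - p) * c + p) = 0) ∧
      (∀ c' ∈ Ioo (0 : ℝ) 1,
        (1 - 2 * ζ * c') * log (1 + p * (1 / c' - 1))
            - (1 - ζ * c') * p / ((1 - p) * c' + p) = 0 → c' = c) ∧
      (∀ c' ∈ Ioo (0 : ℝ) 1, R c' ≤ R c) ∧
      (∀ c' ∈ Ioo (0 : ℝ) 1, (∀ c'' ∈ Ioo (0 : ℝ) 1, R c'' ≤ R c') → c' = c) ∧
      (∀ c' ∈ Ioo (0 : ℝ) 1, Rfree c' ≤ Rfree cR) ∧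
      (∀ c' ∈ Ioo (0 : ℝ) 1, (∀ c'' ∈ Ioo (0 : ℝ) 1, Rfree c'' ≤ Rfree c') → c' = cR) ∧
      (0 < ζ → c < cR) := by
  intro R Rfree
  obtain ⟨c, hc, hcstat⟩ := exists_effectiveRateDeriv_eq_zero hp ζ
  obtain ⟨cR, hcR, hcRstat⟩ := exists_effectiveRateDeriv_eq_zero hp 0
  have hR (x : ℝ) : R x = G * L * effectiveRate p ζ x := by
    simp only [R, effectiveRate, zfRate]
    ring
  have hRfree (x : ℝ) : Rfree x = G * L * effectiveRate p 0 x := by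
    simp only [Rfree, effectiveRate, zfRate]
    ring
  have hGL : 0 < G * L := mul_pos hG hL
  have hRlt : ∀ x ∈ Ioo (0 : ℝ) 1, x ≠ c → R x < R c := fun x hx hxc => by
    simpa only [hR] using mul_lt_mul_of_pos_left
      (effectiveRate_lt_of_effectiveRateDeriv_eq_zero hp hζ hc hcstat x hx hxc) hGL
  have hRfreelt : ∀ x ∈ Ioo (0 : ℝ) 1, x ≠ cR → Rfree x < Rfree cR := fun x hx hxc => by
    simpa only [hRfree] using mul_lt_mul_of_pos_left
      (effectiveRate_lt_of_effectiveRateDeriv_eq_zero hp zero_le_one hcR hcRstat x hx hxc) hGL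
  exact ⟨c, hc, cR, hcR, hcstat,
    fun x hx hxstat => eq_of_effectiveRateDeriv_eq_zero hp hζ hc hcstat hx hxstat,
    le_of_forall_ne_lt hRlt, eq_of_forall_le_of_forall_ne_lt hc hRlt,
    le_of_forall_ne_lt hRfreelt, eq_of_forall_le_of_forall_ne_lt hcR hRfreelt,
    fun hζ0 => lt_of_effectiveRateDeriv_eq_zero_of_cost_lt hp hζ0 hζ hc hcstat hcR hcRstat⟩

/-- With `p = P_t/G` and `ζ ∈ (0,1)`, the effective ZF rate
`𝓡(c) = (1 - ζc)·c·G·L·ln(1 + p(1/c - 1))` on `(0,1)` has a unique stationary point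
`c* ∈ (0,1)` solving `(1 - 2ζc*)·ln(1 + p(1/c* - 1)) - (1 - ζc*)·p/((1-p)c* + p) = 0`,
which is the unique global maximizer of `𝓡` on `(0,1)`; moreover `c* < c*_R`, where `c*_R`
is the unique maximizer on `(0,1)` of the cost-free rate `c ↦ c·G·L·ln(1 + p(1/c - 1))`. -/
theorem stmt_6 (Pt : ℝ) (hPt : 0 < Pt) (G : ℕ) (hG : 1 ≤ G) (ζ L : ℝ)
    (hζ : ζ ∈ Set.Ioo (0 : ℝ) 1) (hL : 0 < L) :
    let p : ℝ := Pt / G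
    let R : ℝ → ℝ := fun c => (1 - ζ * c) * c * G * L * Real.log (1 + p * (1 / c - 1))
    let Rfree : ℝ → ℝ := fun c => c * G * L * Real.log (1 + p * (1 / c - 1))
    ∃ c ∈ Set.Ioo (0 : ℝ) 1, ∃ cR ∈ Set.Ioo (0 : ℝ) 1,
      ((1 - 2 * ζ * c) * Real.log (1 + p * (1 / c - 1))
          - (1 - ζ * c) * p / ((1 - p) * c + p) = 0) ∧
      (∀ c' ∈ Set.Ioo (0 : ℝ) 1,
        (1 - 2 * ζ * c') * Real.log (1 + p * (1 / c' - 1))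
            - (1 - ζ * c') * p / ((1 - p) * c' + p) = 0 → c' = c) ∧
      (∀ c' ∈ Set.Ioo (0 : ℝ) 1, R c' ≤ R c) ∧
      (∀ c' ∈ Set.Ioo (0 : ℝ) 1, (∀ c'' ∈ Set.Ioo (0 : ℝ) 1, R c'' ≤ R c') → c' = c) ∧
      (∀ c' ∈ Set.Ioo (0 : ℝ) 1, Rfree c' ≤ Rfree cR) ∧
      (∀ c' ∈ Set.Ioo (0 : ℝ) 1, (∀ c'' ∈ Set.Ioo (0 : ℝ) 1, Rfree c'' ≤ Rfree c') → c' = cR) ∧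
      c < cR := by
  obtain ⟨c, hc, cR, hcR, hzero, huniq, hmax, hmaxUniq, hmaxR, hmaxUniqR, hlt⟩ :=
    stmt_6_general (div_pos hPt (Nat.cast_pos.2 hG)) (Nat.cast_pos.2 hG) hζ.2.le hL
  exact ⟨c, hc, cR, hcR, hzero, huniq, hmax, hmaxUniq, hmaxR, hmaxUniqR, hlt hζ.1⟩
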